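/- Let ε∈(0,1). For every h∈[H] and every s∈S_h, max_{π∈Π̄_{h−1,ε}} d̄^π(s) = max_{π∈Π̄_ε} d̄^π(s), i.e., for states at layer h the maximal occupancy over the (h−1)-st truncated class equals the maximal occupancy over the fully truncated class Π̄_ε. -/

import Mathlib

/-! The occupancy of a layer-`h` state is determined by the actions taken at layers `1, …, h-1`
(`occM_congr`), because an observation made at time `n` decodes to a state of layer `n`
(`lay_of_mem_support_trajAux`). Passing from the `t`-th to the `(t+1)`-st truncated class only
changes policies at layer `t+1`, so for `t + 1 ≥ h` the two classes realise the same
occupancies of layer-`h` states (`iSup_truncCls_succ`). Induction on `t` from `h-1` up to `H`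
concludes. -/

open scoped ENNReal Classical
open PMF

noncomputable section

/-- Negative logarithm on `ℝ≥0∞`, with `nlog 0 = ∞` (used for log-loss objectives:
maximizing `∑ ln f` is the same as minimizing `∑ nlog f`). -/
def nlog (x : ℝ≥0∞) : ℝ≥0∞ := if x = 0 then ⊤ else ENNReal.ofReal (-Real.log x.toReal)

/-- `n` i.i.d. samples from `μ`, as a `PMF` on lists. -/
noncomputable def PMF.iid {β : Type} (μ : PMF β) : ℕ → PMF (List β)
  | 0 => PMF.pure []
  | n + 1 => μ.bind fun b => (PMF.iid μ n).map fun l => b :: l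

/-- Product of a finite family of `PMF`s along a list of indices. -/
noncomputable def PMF.piList {ι β : Type} (μ : ι → PMF β) (g₀ : ι → β) :
    List ι → PMF (ι → β)
  | [] => PMF.pure g₀
  | i :: is => (μ i).bind fun b => (PMF.piList μ g₀ is).map fun g => Function.update g i b

/-- Product of a finite family of `PMF`s. -/
noncomputable def PMF.piFam {ι β : Type} [Fintype ι] [Nonempty β] (μ : ι → PMF β) :
    PMF (ι → β) :=
  PMF.piList μ (fun _ => Classical.arbitrary β) Finset.univ.toList

/-- Probability of an event under a `PMF`. -/
noncomputable def PMF.pr {β : Type} (μ : PMF β) (E : Set β) : ℝ≥0∞ := μ.toOuterMeasure E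

/-- A (layered) Block MDP with horizon `H`.  Latent states `σ` are partitioned into
layers via `lay` (the layer-`h` states are `S_h = {s | lay s = h}`), actions are `α`,
observations are `χ`, `trans` is the latent transition kernel, `init` the initial latent
state distribution, `emit` the emission distribution and `dec` the true decoder `φ⋆`
(decodability is the field `dec_emit`). A tabular MDP is the special case `χ = σ`,
`emit s = pure s`, `dec = id`. -/
structure BMDP (σ χ α : Type) where
  H : ℕ
  Hpos : 1 ≤ H
  lay : σ → ℕ
  init : PMF σ
  trans : σ → α → PMF σ
  emit : σ → PMF χ
  dec : χ → σ
  init_lay : ∀ s ∈ init.support, lay s = 1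
  trans_lay : ∀ s a, ∀ s' ∈ (trans s a).support, lay s' = lay s + 1
  dec_emit : ∀ s, ∀ x ∈ (emit s).support, dec x = s

namespace BMDP

variable {σ χ α : Type}

/-- A randomized, possibly non-Markovian, (partial) policy: it maps the strict past
observations `x_{l:τ-1}` together with the current observation `x_τ` to a distribution
over actions. -/
abbrev RPol (χ α : Type) := List χ → χ → PMF α

/-- A deterministic, possibly non-Markovian, (partial) policy. -/
abbrev DPol (χ α : Type) := List χ → χ → α

noncomputable def detP (π : DPol χ α) : RPol χ α := fun p c => PMF.pure (π p c)

noncomputable def mkMarkov (π : χ → α) : RPol χ α := fun _ c => PMF.pure (π c)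

/-- The uniformly random policy `π_unif`. -/
noncomputable def unifPol (χ α : Type) [Fintype α] [Nonempty α] : RPol χ α :=
  fun _ _ => PMF.uniformOfFintype α

/-- `π ∘_t π'`: follow `π` before layer `t`, and `π'` (fed the history starting at
layer `t`) from layer `t` onwards.  (The current layer is `past.length + 1`.) -/
noncomputable def compAt (π π' : RPol χ α) (t : ℕ) : RPol χ α :=
  fun past cur => if past.length + 1 < t then π past cur else π' (past.drop (t - 1)) cur

/-- Distribution of `(s_{n+1}, x_{1:n}, x_{n+1})` when executing `π` (layer `= n+1`). -/
noncomputable def trajAux (M : BMDP σ χ α) (π : RPol χ α) : ℕ → PMF (σ × List χ × χ)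
  | 0 => M.init.bind fun s => (M.emit s).map fun x => (s, ([], x))
  | n + 1 => (trajAux M π n).bind fun ω => (π ω.2.1 ω.2.2).bind fun a =>
      (M.trans ω.1 a).bind fun s' => (M.emit s').map fun x' => (s', (ω.2.1 ++ [ω.2.2], x'))

/-- Occupancy `d^π(s) = P^π[s_{lay s} = s]`. -/
noncomputable def occ (M : BMDP σ χ α) (π : RPol χ α) (s : σ) : ℝ≥0∞ :=
  ((M.trajAux π (M.lay s - 1)).map Prod.fst) s

/-- Occupancy of a Markovian policy. -/
noncomputable def occM (M : BMDP σ χ α) (π : χ → α) (s : σ) : ℝ≥0∞ :=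
  M.occ (mkMarkov π) s

/-- Rollout: from latent state `s`, take action `a`, then follow the partial policy `π`
(which is fed the history starting at the next layer) for `k` more steps:
distribution of `(s_{lay s + k + 1}, x_{lay s + 1 : lay s + k}, x_{lay s + k + 1})`. -/
noncomputable def roll (M : BMDP σ χ α) (π : RPol χ α) (s : σ) (a : α) :
    ℕ → PMF (σ × List χ × χ)
  | 0 => (M.trans s a).bind fun s' => (M.emit s').map fun x' => (s', ([], x'))
  | k + 1 => (roll M π s a k).bind fun ω => (π ω.2.1 ω.2.2).bind fun a' =>
      (M.trans ω.1 a').bind fun s'' => (M.emit s'').map fun x'' =>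
        (s'', (ω.2.1 ++ [ω.2.2], x''))

/-- `P^π[s_h = ⋅ ∣ s_t = s, a_t = a]`, the conditional law of the latent state at layer
`h` given `s_t = s, a_t = a`, rolling out with the partial policy `π ∈ Π_NM^{t+1:h-1}`. -/
noncomputable def condProb (M : BMDP σ χ α) (π : RPol χ α) (t h : ℕ) (s : σ) (a : α) :
    PMF σ :=
  (M.roll π s a (h - t - 1)).map Prod.fst

/-- The reward `r_τ(x; s') = 1{φ⋆(x) = s'}`. -/
noncomputable def rwd (M : BMDP σ χ α) (s' : σ) (x : χ) : ℝ≥0∞ :=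
  if M.dec x = s' then 1 else 0

/-- `Q_t^{π}(x, a; s') = r_t(x;s') + E^π[∑_{τ=t+1}^h r_τ(x_τ; s') ∣ x_t = x, a_t = a]`
for a rollout partial policy `π ∈ Π_NM^{t+1:h-1}`. -/
noncomputable def Qf (M : BMDP σ χ α) (π : RPol χ α) (t h : ℕ) (x : χ) (a : α)
    (s' : σ) : ℝ≥0∞ :=
  M.rwd s' x + ∑' ω : σ × List χ × χ,
    (M.roll π (M.dec x) a (h - t - 1)) ω *
      (((ω.2.1 ++ [ω.2.2]).countP fun y => decide (M.dec y = s')) : ℝ≥0∞)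

/-- `V_t^{π}(x; s') = r_t(x;s') + E^π[∑_{τ=t+1}^h r_τ(x_τ; s') ∣ x_t = x, a_t = π(x)]`
for a partial policy `π ∈ Π_NM^{t:h-1}`. -/
noncomputable def Vf (M : BMDP σ χ α) (π : RPol χ α) (t h : ℕ) (x : χ) (s' : σ) :
    ℝ≥0∞ :=
  ∑' a : α, (π [] x) a * M.Qf (fun past cur => π (x :: past) cur) t h x a s'

/-- Expectation over the initial observation `x_1`. -/
noncomputable def Einit (M : BMDP σ χ α) (g : χ → ℝ) : ℝ :=
  ∑' s : σ, ∑' x : χ, (M.init s * M.emit s x).toReal * g x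

/-- Expectation of `g (s_t) (x_t)` under the trajectory distribution of `π`. -/
noncomputable def Etraj (M : BMDP σ χ α) (π : RPol χ α) (t : ℕ) (g : σ → χ → ℝ) : ℝ :=
  ∑' ω : σ × List χ × χ, ((M.trajAux π (t - 1)) ω).toReal * g ω.1 ω.2.2

/-- Trajectory distribution with recorded actions. -/
noncomputable def trajFull (M : BMDP σ χ α) (π : RPol χ α) :
    ℕ → PMF (σ × List (χ × α) × χ)
  | 0 => M.init.bind fun s => (M.emit s).map fun x => (s, ([], x))
  | n + 1 => (trajFull M π n).bind fun ω => (π (ω.2.1.map Prod.fst) ω.2.2).bind fun a =>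
      (M.trans ω.1 a).bind fun s' => (M.emit s').map fun x' =>
        (s', (ω.2.1 ++ [(ω.2.2, a)], x'))

/-- Expected total reward `E^π[∑_{h=1}^H r_h]` for the mean-reward function `rb`. -/
noncomputable def valR (M : BMDP σ χ α) (rb : σ → α → ℝ) (π : RPol χ α) : ℝ :=
  ∑' ω : σ × List (χ × α) × χ, ((M.trajFull π (M.H - 1)) ω).toReal *
    ((ω.2.1.map fun p => rb (M.dec p.1) p.2).sum +
      ∑' a : α, ((π (ω.2.1.map Prod.fst) ω.2.2) a).toReal * rb (M.dec ω.2.2) a)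

/-! ### The extended BMDP `M̄` -/

noncomputable def extTrans (M : BMDP σ χ α) : σ ⊕ ℕ → α ⊕ Unit → PMF (σ ⊕ ℕ)
  | Sum.inl s, Sum.inl a => (M.trans s a).map Sum.inl
  | Sum.inl s, Sum.inr _ => PMF.pure (Sum.inr (M.lay s + 1))
  | Sum.inr k, _ => PMF.pure (Sum.inr (k + 1))

noncomputable def extEmit (M : BMDP σ χ α) : σ ⊕ ℕ → PMF (χ ⊕ ℕ)
  | Sum.inl s => (M.emit s).map Sum.inl
  | Sum.inr k => PMF.pure (Sum.inr k)

/-- The extended BMDP `M̄`: terminal states `t_h = Sum.inr h`, terminal action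
`𝔞 = Sum.inr ()`; taking `𝔞` at a layer-`h` state leads deterministically to `t_{h+1}`,
from `t_h` every action leads to `t_{h+1}`, each `t_h` emits itself, and the dynamics
are otherwise identical to `M`. -/
noncomputable def ext (M : BMDP σ χ α) : BMDP (σ ⊕ ℕ) (χ ⊕ ℕ) (α ⊕ Unit) where
  H := M.H
  Hpos := M.Hpos
  lay := Sum.elim M.lay id
  init := M.init.map Sum.inl
  trans := M.extTrans
  emit := M.extEmit
  dec := Sum.elim (fun x => Sum.inl (M.dec x)) Sum.inr
  init_lay := by
    intro s hs
    simp only [PMF.support_map, Set.mem_image] at hs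
    obtain ⟨s₀, hs₀, rfl⟩ := hs
    simpa using M.init_lay s₀ hs₀
  trans_lay := by
    rintro (s | k) (a | u) s' hs' <;>
      simp only [extTrans, PMF.support_map, PMF.support_pure, Set.mem_image,
        Set.mem_singleton_iff] at hs'
    · obtain ⟨s₀, hs₀, rfl⟩ := hs'
      simpa using M.trans_lay s a s₀ hs₀
    · subst hs'; simp
    · subst hs'; simp
    · subst hs'; simp
  dec_emit := by
    rintro (s | k) x hx <;>
      simp only [extEmit, PMF.support_map, PMF.support_pure, Set.mem_image,
        Set.mem_singleton_iff] at hx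
    · obtain ⟨x₀, hx₀, rfl⟩ := hx
      simp [M.dec_emit s x₀ hx₀]
    · subst hx; simp

/-- Canonical extension of a deterministic policy of `M` to the extended BMDP `M̄`
(it takes the terminal action exactly at terminal observations). -/
noncomputable def extD (π : DPol χ α) : DPol (χ ⊕ ℕ) (α ⊕ Unit) :=
  fun past cur => Sum.elim
    (fun x => Sum.inl (π (past.filterMap fun y => y.getLeft?) x))
    (fun _ => Sum.inr ()) cur

/-- Canonical extension of a randomized policy of `M` to the extended BMDP `M̄`. -/
noncomputable def extR (π : RPol χ α) : RPol (χ ⊕ ℕ) (α ⊕ Unit) :=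
  fun past cur => Sum.elim
    (fun x => (π (past.filterMap fun y => y.getLeft?) x).map Sum.inl)
    (fun _ => PMF.pure (Sum.inr ())) cur

/-- `d̄^π(s)`: occupancy in the extended BMDP of a Markovian policy on `M̄`. -/
noncomputable def dbar (M : BMDP σ χ α) (π : (χ ⊕ ℕ) → α ⊕ Unit) (s : σ) : ℝ≥0∞ :=
  M.ext.occM π (Sum.inl s)

/-- `d̄^π(s)` for a (possibly non-Markovian, randomized) policy on `M̄`. -/
noncomputable def dbarR (M : BMDP σ χ α) (π : RPol (χ ⊕ ℕ) (α ⊕ Unit)) (s : σ) : ℝ≥0∞ :=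
  M.ext.occ π (Sum.inl s)

/-- The truncated policy classes `Π̄_{t,ε}`:  `Π̄_{0,ε}` consists of all Markovian
policies on `M̄`, and `π ∈ Π̄_{t+1,ε}` iff there is `π' ∈ Π̄_{t,ε}` such that for all
`h ∈ [H]`, all `s ∈ S̄_h` and all `x ∈ φ⋆⁻¹(s)`, `π x = 𝔞` when `h = t+1` and
`max_{π̃ ∈ Π̄_{t,ε}} d̄^{π̃}(s) < ε`, and `π x = π' x` otherwise. -/
noncomputable def truncCls (M : BMDP σ χ α) (ε : ℝ≥0∞) :
    ℕ → Set ((χ ⊕ ℕ) → α ⊕ Unit)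
  | 0 => Set.univ
  | t + 1 => { π | ∃ π' ∈ truncCls M ε t, ∀ x : χ ⊕ ℕ,
      1 ≤ M.ext.lay (M.ext.dec x) → M.ext.lay (M.ext.dec x) ≤ M.H →
        π x = if M.ext.lay (M.ext.dec x) = t + 1 ∧
                (⨆ π'' ∈ truncCls M ε t, M.ext.occM π'' (M.ext.dec x)) < ε
              then Sum.inr () else π' x }

/-- The truncated policy class `Π̄_ε := Π̄_{H,ε}`. -/
noncomputable def truncated (M : BMDP σ χ α) (ε : ℝ≥0∞) :
    Set ((χ ⊕ ℕ) → α ⊕ Unit) :=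
  truncCls M ε M.H

/-- A tabular MDP: observations coincide with latent states. -/
def IsTabular (M : BMDP σ σ α) : Prop := (∀ s, M.emit s = PMF.pure s) ∧ M.dec = id

end BMDP
end
namespace BMDP

variable {σ χ α : Type}

/-! ### Data-collection distributions and algorithm runs (IKDP / MusIK / PSDP) -/

/-- Distribution of a single IKDP sample `(i_t, a_t, x_t, x_h)`: sample `i_t ∼ unif([S])`
(states of `M` double as indices `[S]`), roll in with a uniformly chosen policy from the
cover `Ψt`, play `a_t ∼ unif(A)`, and roll out with `ρ i_t` until layer `h`. -/
noncomputable def ikdpSample [Fintype σ] [Nonempty σ] [Fintype α] [Nonempty α]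
    (M : BMDP σ χ α) (Ψt : σ → RPol χ α) (ρ : σ → RPol χ α) (t h : ℕ) :
    PMF (σ × α × χ × χ) :=
  (PMF.uniformOfFintype σ).bind fun i =>
    (PMF.uniformOfFintype σ).bind fun k =>
      (M.trajAux (Ψt k) (t - 1)).bind fun ω =>
        (PMF.uniformOfFintype α).bind fun a =>
          (M.roll (ρ i) ω.1 a (h - t - 1)).map fun ω' => (i, a, ω.2.2, ω'.2.2)

/-- Distribution of a single IKDP.Tab sample `(a_t, s_t, s_h)`. -/
noncomputable def ikdpTabSample [Fintype σ] [Nonempty σ] [Fintype α] [Nonempty α]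
    (M : BMDP σ σ α) (Ψt : σ → RPol σ α) (ρ : RPol σ α) (t h : ℕ) :
    PMF (α × σ × σ) :=
  (PMF.uniformOfFintype σ).bind fun k =>
    (M.trajAux (Ψt k) (t - 1)).bind fun ω =>
      (PMF.uniformOfFintype α).bind fun a =>
        (M.roll ρ ω.1 a (h - t - 1)).map fun ω' => (a, ω.1, ω'.1)

/-- `f : [S]² → Δ(A × [S])`. -/
def IsDistr2 {σ α : Type} (f : σ → σ → α × σ → ℝ≥0∞) : Prop :=
  ∀ s s', ∑' p : α × σ, f s s' p = 1

/-- `f : [S]² → Δ(A)`. -/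
def IsDistr1 {σ α : Type} (f : σ → σ → α → ℝ≥0∞) : Prop :=
  ∀ s s', ∑' a : α, f s s' a = 1

/-- Empirical log-loss of `(f, φ)` on the dataset `D` (maximizing the log-likelihood
`∑ ln f((a,j) ∣ φ(x), φ(x'))` is the same as minimizing this quantity). -/
noncomputable def empLoss (f : σ → σ → α × σ → ℝ≥0∞) (φ : χ → σ)
    (D : List (σ × α × χ × χ)) : ℝ≥0∞ :=
  (D.map fun d => nlog (f (φ d.2.2.1) (φ d.2.2.2) (d.2.1, d.1))).sum

/-- `(f, φ)` maximizes the IKDP log-likelihood objective on the dataset `D` over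
`{f : [S]² → Δ(A×[S])} × Φ`. -/
def IsMLE (Φ : Finset (χ → σ)) (D : List (σ × α × χ × χ))
    (f : σ → σ → α × σ → ℝ≥0∞) (φ : χ → σ) : Prop :=
  IsDistr2 f ∧ φ ∈ Φ ∧
    ∀ f' φ', IsDistr2 f' → φ' ∈ Φ → empLoss f φ D ≤ empLoss f' φ' D

noncomputable def empLossTab (f : σ → σ → α → ℝ≥0∞) (D : List (α × σ × σ)) : ℝ≥0∞ :=
  (D.map fun d => nlog (f d.2.1 d.2.2 d.1)).sum

/-- `f` maximizes the IKDP.Tab log-likelihood objective on `D` over `{f : [S]² → Δ(A)}`. -/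
def IsMLETab (D : List (α × σ × σ)) (f : σ → σ → α → ℝ≥0∞) : Prop :=
  IsDistr1 f ∧ ∀ f', IsDistr1 f' → empLossTab f D ≤ empLossTab f' D

/-- IKDP's non-Markovian policy composition rule: at the first layer of the partial
policy play `ahat`, afterwards follow `πnext (ihat x_t)` on the shifted history. -/
noncomputable def composePol (πnext : σ → DPol χ α) (ahat : χ → α) (ihat : χ → σ) :
    DPol χ α :=
  fun past cur => match past with
    | [] => ahat cur
    | x :: rest => πnext (ihat x) rest cur

/-- One IKDP policy-update: from the dataset `D` compute `(f̂, φ̂)` via the selector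
`selF/selPhi`, then the argmax pair `(â^{(i)}, ι̂^{(i)})` via `selAI` and compose. -/
noncomputable def mkFam (selF : List (σ × α × χ × χ) → σ → σ → α × σ → ℝ≥0∞)
    (selPhi : List (σ × α × χ × χ) → χ → σ)
    (selAI : (σ → σ → α × σ → ℝ≥0∞) → (χ → σ) → σ → χ → α × σ)
    (D : List (σ × α × χ × χ)) (πnext : σ → DPol χ α) : σ → DPol χ α :=
  fun i => composePol πnext (fun x => (selAI (selF D) (selPhi D) i x).1)
    (fun x => (selAI (selF D) (selPhi D) i x).2)

/-- The IKDP run for target layer `h`: after `m` backward steps the value is the map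
sending each `t ∈ [h-m .. h-1]` to the family `{π̂^{(i,t)}}_{i∈[S]}` (layers not yet
processed hold junk).  Step `m+1` processes `t = h-1-m`, sampling `n` data points with
roll-in `unif(Ψ^(t))`, uniform action, and roll-out `π̂^{(i,t+1)}` (`π_unif` if `t+1=h`). -/
noncomputable def ikdpRun [Fintype σ] [Nonempty σ] [Fintype α] [Nonempty α]
    (M : BMDP σ χ α)
    (selF : List (σ × α × χ × χ) → σ → σ → α × σ → ℝ≥0∞)
    (selPhi : List (σ × α × χ × χ) → χ → σ)
    (selAI : (σ → σ → α × σ → ℝ≥0∞) → (χ → σ) → σ → χ → α × σ)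
    (Ψ : ℕ → σ → DPol χ α) (h n : ℕ) : ℕ → PMF (ℕ → σ → DPol χ α)
  | 0 => PMF.pure fun _ _ _ _ => Classical.arbitrary α
  | m + 1 => (ikdpRun M selF selPhi selAI Ψ h n m).bind fun fams =>
      (PMF.iid (M.ikdpSample (fun k => detP (Ψ (h - 1 - m) k))
          (if m = 0 then fun _ => unifPol χ α else fun i => detP (fams (h - m) i))
          (h - 1 - m) h) n).map fun D =>
        Function.update fams (h - 1 - m) (mkFam selF selPhi selAI D (fams (h - m)))

/-- The MusIK run: after `m` steps, the value maps each layer `hh ∈ [2 .. m+1]` to the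
policy cover `Ψ^{(hh)}` (a family of `S` partial policies in `Π_NM^{1:hh-1}`), built by
calling IKDP with the previously built covers. -/
noncomputable def musikRun [Fintype σ] [Nonempty σ] [Fintype α] [Nonempty α]
    (M : BMDP σ χ α)
    (selF : List (σ × α × χ × χ) → σ → σ → α × σ → ℝ≥0∞)
    (selPhi : List (σ × α × χ × χ) → χ → σ)
    (selAI : (σ → σ → α × σ → ℝ≥0∞) → (χ → σ) → σ → χ → α × σ)
    (n : ℕ) : ℕ → PMF (ℕ → σ → DPol χ α)
  | 0 => PMF.pure fun _ _ _ _ => Classical.arbitrary α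
  | m + 1 => (musikRun M selF selPhi selAI n m).bind fun Ψ =>
      (ikdpRun M selF selPhi selAI Ψ (m + 2) n (m + 1)).map fun fams =>
        Function.update Ψ (m + 2) (fams 1)

/-- One IKDP.Tab policy-update (Markovian): at layer `t` play the argmax action
`â^{(i,t)}(s)`, at later layers agree with the previously constructed policy. -/
noncomputable def mkFamTab (lay : σ → ℕ)
    (selFTab : List (α × σ × σ) → σ → σ → α → ℝ≥0∞)
    (selATab : (σ → σ → α → ℝ≥0∞) → σ → σ → α)
    (Ds : σ → List (α × σ × σ)) (t : ℕ) (πnext : σ → σ → α) : σ → σ → α :=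
  fun i s => if lay s = t then selATab (selFTab (Ds i)) i s else πnext i s

/-- The IKDP.Tab run (tabular variant; a fresh dataset of `n` samples is drawn for
every index `i ∈ [S]` at every backward step). -/
noncomputable def ikdpTabRun [Fintype σ] [Nonempty σ] [Fintype α] [Nonempty α]
    (M : BMDP σ σ α)
    (selFTab : List (α × σ × σ) → σ → σ → α → ℝ≥0∞)
    (selATab : (σ → σ → α → ℝ≥0∞) → σ → σ → α)
    (Ψ : ℕ → σ → σ → α) (h n : ℕ) : ℕ → PMF (ℕ → σ → σ → α)
  | 0 => PMF.pure fun _ _ _ => Classical.arbitrary α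
  | m + 1 => (ikdpTabRun M selFTab selATab Ψ h n m).bind fun fams =>
      (PMF.piFam (fun i : σ =>
        PMF.iid (M.ikdpTabSample (fun k => mkMarkov (Ψ (h - 1 - m) k))
          (if m = 0 then unifPol σ α else mkMarkov (fams (h - m) i))
          (h - 1 - m) h) n)).map fun Ds =>
        Function.update fams (h - 1 - m)
          (mkFamTab M.lay selFTab selATab Ds (h - 1 - m) (fams (h - m)))

/-- The MusIK.Tab run. -/
noncomputable def musikTabRun [Fintype σ] [Nonempty σ] [Fintype α] [Nonempty α]
    (M : BMDP σ σ α)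
    (selFTab : List (α × σ × σ) → σ → σ → α → ℝ≥0∞)
    (selATab : (σ → σ → α → ℝ≥0∞) → σ → σ → α)
    (n : ℕ) : ℕ → PMF (ℕ → σ → σ → α)
  | 0 => PMF.pure fun _ _ _ => Classical.arbitrary α
  | m + 1 => (musikTabRun M selFTab selATab n m).bind fun Ψ =>
      (ikdpTabRun M selFTab selATab Ψ (m + 2) n (m + 1)).map fun fams =>
        Function.update Ψ (m + 2) (fams 1)

/-! ### Reward-based machinery (PSDP) -/

/-- Distribution of the cumulative (random) reward collected over `k+1` layers starting
from the current state/observation `ω` and the action `a`, rolling out with `π`. -/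
noncomputable def cumRew (M : BMDP σ χ α) (Rw : χ → α → PMF ℝ) (π : RPol χ α) :
    ℕ → σ × List χ × χ → α → PMF ℝ
  | 0, ω, a => Rw ω.2.2 a
  | k + 1, ω, a => (Rw ω.2.2 a).bind fun r =>
      (M.trans ω.1 a).bind fun s' => (M.emit s').bind fun x' =>
        (π (ω.2.1 ++ [ω.2.2]) x').bind fun a' =>
          (cumRew M Rw π k (s', (ω.2.1 ++ [ω.2.2], x')) a').map fun rest => r + rest

/-- Distribution of `∑_{τ=h+1}^{h+k} r_τ` given `s_h = s, a_h = a`, rolling out with `π`. -/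
noncomputable def tailRew (M : BMDP σ χ α) (Rw : χ → α → PMF ℝ) (π : RPol χ α)
    (s : σ) (a : α) : ℕ → PMF ℝ
  | 0 => PMF.pure 0
  | k + 1 => (M.trans s a).bind fun s' => (M.emit s').bind fun x' =>
      (π [] x').bind fun a' => cumRew M Rw π k (s', ([], x')) a'

/-- Distribution of a PSDP sample `(x_h, a_h, ∑_{τ=h}^H r_τ)`: roll in with a uniformly
chosen policy from `Ψh`, play `a_h ∼ unif(A)`, roll out with `πnext`. -/
noncomputable def psdpSample [Fintype σ] [Nonempty σ] [Fintype α] [Nonempty α]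
    (M : BMDP σ χ α) (Rw : χ → α → PMF ℝ) (Ψh : σ → RPol χ α) (πnext : RPol χ α)
    (h : ℕ) : PMF (χ × α × ℝ) :=
  (PMF.uniformOfFintype σ).bind fun k =>
    (M.trajAux (Ψh k) (h - 1)).bind fun ω =>
      (PMF.uniformOfFintype α).bind fun a =>
        (M.cumRew Rw πnext (M.H - h) ω a).map fun R => (ω.2.2, a, R)

/-- Empirical square loss of `(f, φ)` on a PSDP dataset. -/
noncomputable def empLS (f : σ → α → ℝ) (φ : χ → σ) (D : List (χ × α × ℝ)) : ℝ :=
  (D.map fun d => (f (φ d.1) d.2.1 - d.2.2) ^ 2).sum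

/-- `(f, φ)` minimizes the PSDP least-squares objective on `D` over
`{f : [S] × A → [0, b]} × Φ`. -/
def IsLSE (Φ : Finset (χ → σ)) (b : ℝ) (D : List (χ × α × ℝ)) (f : σ → α → ℝ)
    (φ : χ → σ) : Prop :=
  (∀ s a, f s a ∈ Set.Icc (0 : ℝ) b) ∧ φ ∈ Φ ∧
    ∀ f' φ', (∀ s a, f' s a ∈ Set.Icc (0 : ℝ) b) → φ' ∈ Φ →
      empLS f φ D ≤ empLS f' φ' D

/-- The PSDP run: after `m` steps the value is the Markovian partial policy
`π̂^{(H-m+1)}`; step `m+1` processes layer `h = H - m`, drawing `n` samples and taking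
the greedy policy of the least-squares solution (via the selectors). -/
noncomputable def psdpRun [Fintype σ] [Nonempty σ] [Fintype α] [Nonempty α]
    (M : BMDP σ χ α) (Rw : χ → α → PMF ℝ)
    (selLS : ℕ → List (χ × α × ℝ) → (σ → α → ℝ) × (χ → σ))
    (selG : (σ → α → ℝ) → (χ → σ) → χ → α)
    (Ψ : ℕ → σ → RPol χ α) (n : ℕ) : ℕ → PMF (χ → α)
  | 0 => PMF.pure fun _ => Classical.arbitrary α
  | m + 1 => (psdpRun M Rw selLS selG Ψ n m).bind fun πn =>
      (PMF.iid (M.psdpSample Rw (Ψ (M.H - m)) (mkMarkov πn) (M.H - m)) n).map fun D =>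
        fun x => if M.lay (M.dec x) = M.H - m
          then selG (selLS (M.H - m) D).1 (selLS (M.H - m) D).2 x else πn x

end BMDP

namespace BMDP

variable {σ χ α : Type}

lemma pmf_bind_congr {β γ : Type} (p : PMF β) (f g : β → PMF γ)
    (hfg : ∀ b ∈ p.support, f b = g b) : p.bind f = p.bind g := by
  ext c
  simp only [PMF.bind_apply]
  refine tsum_congr fun b => ?_
  by_cases hb : b ∈ p.support
  · rw [hfg b hb]
  · rw [PMF.apply_eq_zero_iff p b |>.2 hb, zero_mul, zero_mul]

/-- Along any trajectory, the state at time `n + 1` lies in layer `n + 1` and is decoded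
correctly from the current observation. -/
lemma lay_of_mem_support_trajAux (M : BMDP σ χ α) (π : RPol χ α) (n : ℕ) :
    ∀ ω ∈ (M.trajAux π n).support, M.lay ω.1 = n + 1 ∧ M.dec ω.2.2 = ω.1 := by
  induction n with
  | zero =>
    intro ω hω
    simp only [trajAux, PMF.mem_support_bind_iff, PMF.support_map, Set.mem_image] at hω
    obtain ⟨s, hs, x, hx, rfl⟩ := hω
    exact ⟨by simpa using M.init_lay s hs, M.dec_emit s x hx⟩
  | succ n ih =>
    intro ω hω
    simp only [trajAux, PMF.mem_support_bind_iff, PMF.support_map, Set.mem_image] at hω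
    obtain ⟨ω', hω', a, -, s, hs, x, hx, rfl⟩ := hω
    exact ⟨by simp only [M.trans_lay _ _ s hs, (ih ω' hω').1], M.dec_emit s x hx⟩

/-- Markovian policies agreeing on layers `1, …, n` induce the same law up to layer `n + 1`. -/
lemma trajAux_congr (M : BMDP σ χ α) (π π' : χ → α) (n : ℕ)
    (hπ : ∀ x, 1 ≤ M.lay (M.dec x) → M.lay (M.dec x) ≤ n → π x = π' x) :
    M.trajAux (mkMarkov π) n = M.trajAux (mkMarkov π') n := by
  induction n with
  | zero => rfl
  | succ n ih =>
    simp only [trajAux]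
    rw [ih fun x h1 h2 => hπ x h1 (by omega)]
    refine pmf_bind_congr _ _ _ fun ω hω => ?_
    obtain ⟨h1, h2⟩ := M.lay_of_mem_support_trajAux _ n ω hω
    have hl : M.lay (M.dec ω.2.2) = n + 1 := by rw [h2, h1]
    simp only [mkMarkov]
    rw [hπ ω.2.2 (by omega) (by omega)]

lemma occM_congr (M : BMDP σ χ α) (π π' : χ → α) (s : σ)
    (hπ : ∀ x, 1 ≤ M.lay (M.dec x) → M.lay (M.dec x) ≤ M.lay s - 1 → π x = π' x) :
    M.occM π s = M.occM π' s := by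
  simp only [occM, occ]
  rw [M.trajAux_congr π π' _ hπ]

/-- Truncating at layer `t + 1` does not affect occupancies of states of layers `≤ t + 1`. -/
lemma iSup_truncCls_succ (M : BMDP σ χ α) (ε : ℝ≥0∞) (t : ℕ) (s : σ)
    (hsH : M.lay s ≤ M.H) (hst : M.lay s ≤ t + 1) :
    (⨆ π ∈ M.truncCls ε (t + 1), M.dbar π s) = ⨆ π ∈ M.truncCls ε t, M.dbar π s := by
  have key : ∀ π π' : (χ ⊕ ℕ) → α ⊕ Unit, (∀ x : χ ⊕ ℕ,
      1 ≤ M.ext.lay (M.ext.dec x) → M.ext.lay (M.ext.dec x) ≤ M.H →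
        π x = if M.ext.lay (M.ext.dec x) = t + 1 ∧
                (⨆ π'' ∈ M.truncCls ε t, M.ext.occM π'' (M.ext.dec x)) < ε
              then Sum.inr () else π' x) → M.dbar π s = M.dbar π' s := by
    intro π π' hx
    refine M.ext.occM_congr π π' _ fun x h1 h2 => ?_
    have h3 : M.ext.lay (M.ext.dec x) ≤ M.lay s - 1 := h2
    rw [hx x h1 (by omega), if_neg]
    rintro ⟨h4, -⟩
    omega
  apply le_antisymm
  · refine iSup₂_le fun π hπ => ?_
    obtain ⟨π', hπ', hx⟩ := hπ
    rw [key π π' hx]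
    exact le_iSup₂ (f := fun π (_ : π ∈ M.truncCls ε t) => M.dbar π s) π' hπ'
  · refine iSup₂_le fun π' hπ' => ?_
    -- the truncation of `π'` at layer `t + 1` is a member of the next class
    let π : (χ ⊕ ℕ) → α ⊕ Unit := fun x =>
      if M.ext.lay (M.ext.dec x) = t + 1 ∧
          (⨆ π'' ∈ M.truncCls ε t, M.ext.occM π'' (M.ext.dec x)) < ε
        then Sum.inr () else π' x
    have hπ : π ∈ M.truncCls ε (t + 1) := ⟨π', hπ', fun x _ _ => rfl⟩
    rw [← key π π' fun x _ _ => rfl]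
    exact le_iSup₂ (f := fun π (_ : π ∈ M.truncCls ε (t + 1)) => M.dbar π s) π hπ

end BMDP

/-- Lemma: for layer-`h` states, the maximal occupancy over the
`(h-1)`-st truncated class equals the maximal occupancy over the fully truncated class.
Let `ε ∈ (0,1)`.  For every `h ∈ [H]` and every `s ∈ S_h`,
`max_{π ∈ Π̄_{h-1,ε}} d̄^π(s) = max_{π ∈ Π̄_ε} d̄^π(s)`. -/
theorem truncated_layer_sup_eq
    (σ χ α : Type) (M : BMDP σ χ α) (ε : ℝ) (hε : ε ∈ Set.Ioo (0 : ℝ) 1)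
    (h : ℕ) (hh1 : 1 ≤ h) (hhH : h ≤ M.H) (s : σ) (hs : M.lay s = h) :
    (⨆ π ∈ M.truncCls (ENNReal.ofReal ε) (h - 1), M.dbar π s) =
      (⨆ π ∈ M.truncated (ENNReal.ofReal ε), M.dbar π s) := by
  have hmono : ∀ t, h - 1 ≤ t →
      (⨆ π ∈ M.truncCls (ENNReal.ofReal ε) (h - 1), M.dbar π s) =
        ⨆ π ∈ M.truncCls (ENNReal.ofReal ε) t, M.dbar π s := by
    intro t ht
    induction t, ht using Nat.le_induction with
    | base => rfl
    | succ t ht ih =>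
      rw [ih, M.iSup_truncCls_succ _ t s (by omega) (by omega)]
  exact hmono M.H (by omega)
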